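/- Let f0 = sup_{k≥0} 2^{k−2^k} χ_{[0,2^{2^k})}, a(t,f0) = (1/log(1+t)) ∫_0^t f0(s) ds, and (Mg)(t) = (1/log t) ∫_1^t g(s) ds/s for t > 1. Then limsup_{t→∞} a(t,f0) > limsup_{t→∞} (M a(·,f0))(t); in fact limsup_{t→∞} a(t,f0) ≥ 2/log 2 > 4/(e·log 2) = limsup_{t→∞} (M a(·,f0))(t). -/

import Mathlib

open MeasureTheory Filter Set

/-- `f0 = sup_{k ≥ 0} 2^(k - 2^k) χ_[0, 2^(2^k))`. -/
noncomputable def f0 : ℝ → ℝ := fun t =>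
  ⨆ k : ℕ, if t < (2:ℝ) ^ (2 ^ k) then (2:ℝ) ^ ((k : ℤ) - 2 ^ k) else 0

/-- `a(t, f0) = (1/log(1+t)) ∫_0^t f0(s) ds`. -/
noncomputable def aF : ℝ → ℝ := fun t => (∫ s in (0:ℝ)..t, f0 s) / Real.log (1 + t)

/-- The logarithmic Cesàro mean `(Mg)(t) = (1/log t) ∫_1^t g(s) ds/s`. -/
noncomputable def Mop (g : ℝ → ℝ) (t : ℝ) : ℝ := (∫ s in (1:ℝ)..t, g s / s) / Real.log t

/-!
Put `T n = 2 ^ 2 ^ n`. On `[T n, T (n + 1))` the function `f0` is constant, and its primitive is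
`2 ^ (n + 1) + O(1)` until `t` is comparable to `T (n + 1)`. Hence `a(T n, f0) → 2 / log 2`, while
`∫ a(s, f0) ds / s` over `[1, t]` is `2 ^ (n + 1) * log z + O(n)` with `z = 2 * log t / log (T n)`.
Dividing by `log t` turns this into `(4 / log 2) * (log z / z) + o(1)`. As `t` runs through the
block, `z` runs through `[2, 4]`, an interval containing the maximiser `e` of `log z / z`.
-/

open Real Topology

section Limsup

variable {α ι R : Type*} [ConditionallyCompleteLinearOrder R] [TopologicalSpace R]
  [OrderTopology R] {l : Filter α} {l' : Filter ι} [l'.NeBot] {u v : α → R} {x : ι → α} {c : R}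

lemma le_limsup_of_tendsto_comp (hx : Tendsto x l' l) (hux : Tendsto (u ∘ x) l' (𝓝 c))
    (hu : l.IsBoundedUnder (· ≤ ·) u) : c ≤ limsup u l :=
  hux.limsup_eq.symm.trans_le (hx.limsup_comp_le_limsup hux.isCoboundedUnder_le hu)

lemma limsup_eq_of_eventuallyLE_of_tendsto_comp (huv : u ≤ᶠ[l] v) (hv : Tendsto v l (𝓝 c))
    (hx : Tendsto x l' l) (hux : Tendsto (u ∘ x) l' (𝓝 c)) : limsup u l = c := by
  have : l.NeBot := hx.neBot
  have hu_bdd : l.IsBoundedUnder (· ≤ ·) u := hv.isBoundedUnder_le.mono_le huv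
  have hu_cobdd : l.IsCoboundedUnder (· ≤ ·) u := hux.isCoboundedUnder_le.mono (map_mono hx)
  refine le_antisymm ?_ (le_limsup_of_tendsto_comp hx hux hu_bdd)
  exact (limsup_le_limsup huv hu_cobdd hv.isBoundedUnder_le).trans_eq hv.limsup_eq

end Limsup

lemma log_div_self_le_inv_exp_one {z : ℝ} (hz : 0 < z) : log z / z ≤ (exp 1)⁻¹ := by
  have h : exp 1 * log z ≤ z := exp_one_mul_le_exp.trans_eq (exp_log hz)
  rw [div_le_iff₀ hz, ← div_eq_inv_mul, le_div_iff₀' (exp_pos 1)]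
  exact h

lemma log_one_add_sub_log_le {x : ℝ} (hx : 0 < x) : log (1 + x) - log x ≤ 1 / x := by
  rw [← log_div (by positivity) hx.ne']
  refine (log_le_sub_one_of_pos (by positivity)).trans_eq ?_
  field_simp
  ring

lemma abs_div_log_one_add_sub_div_log_le {x y : ℝ} (hx : 2 ≤ x) (hy : |y| ≤ x) :
    |y / log (1 + x) - y / log x| ≤ 1 / log x := by
  have hx_pos : 0 < x := by linarith
  have hlog : 0 < log x := log_pos (by linarith)
  have hlog_one_add : 1 ≤ log (1 + x) := by
    rw [le_log_iff_exp_le (by positivity)]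
    linarith [exp_one_lt_d9]
  have hgap : 0 ≤ log (1 + x) - log x := sub_nonneg.2 (log_le_log hx_pos (by linarith))
  have hprod : 0 < log (1 + x) * log x := by positivity
  have hdiff : y / log (1 + x) - y / log x =
      -(y * (log (1 + x) - log x) / (log (1 + x) * log x)) := by
    field_simp
    ring
  calc |y / log (1 + x) - y / log x|
      = |y| * (log (1 + x) - log x) / (log (1 + x) * log x) := by
        rw [hdiff, abs_neg, abs_div, abs_mul, abs_of_nonneg hgap, abs_of_pos hprod]
    _ ≤ x * (1 / x) / (1 * log x) := by
        gcongr
        exact log_one_add_sub_log_le hx_pos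
    _ = 1 / log x := by field_simp

lemma intervalIntegrable_inv_div_log {a b : ℝ} (ha : 1 < a) (hb : 1 < b) :
    IntervalIntegrable (fun s => s⁻¹ / log s) volume a b := by
  apply ContinuousOn.intervalIntegrable
  fun_prop (disch := grind [log_pos, Set.uIcc])

lemma abs_integral_div_self_sub_le {g : ℝ → ℝ} {a b c C D : ℝ} (ha : 1 < a) (hab : a ≤ b)
    (hg : IntervalIntegrable (fun s => g s / s) volume a b)
    (h : ∀ s ∈ Ioc a b, |g s - c / log s| ≤ C / log s + D * s) :
    |(∫ s in a..b, g s / s) - c * (log (log b) - log (log a))| ≤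
      C * (log (log b) - log (log a)) + D * (b - a) := by
  have hb : 1 < b := ha.trans_le hab
  have hint := intervalIntegrable_inv_div_log ha hb
  have hbound : ∀ s ∈ Ioc a b, ‖g s / s - c * (s⁻¹ / log s)‖ ≤ C * (s⁻¹ / log s) + D := by
    intro s hs
    have hs_pos : 0 < s := by linarith [hs.1]
    have hlog : log s ≠ 0 := (log_pos (ha.trans hs.1)).ne'
    have hfactor : g s / s - c * (s⁻¹ / log s) = (g s - c / log s) / s := by field_simp
    calc ‖g s / s - c * (s⁻¹ / log s)‖ = |g s - c / log s| / s := by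
          rw [hfactor, norm_eq_abs, abs_div, abs_of_pos hs_pos]
      _ ≤ (C / log s + D * s) / s := by gcongr; exact h s hs
      _ = C * (s⁻¹ / log s) + D := by field_simp
  have key := intervalIntegral.norm_integral_le_of_norm_le hab (ae_of_all _ hbound)
    ((hint.const_mul C).add intervalIntegrable_const)
  rwa [intervalIntegral.integral_sub hg (hint.const_mul c),
    intervalIntegral.integral_add (hint.const_mul C) intervalIntegrable_const,
    intervalIntegral.integral_const_mul, intervalIntegral.integral_const_mul,
    integral_inv_div_log ha hb, intervalIntegral.integral_const, smul_eq_mul,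
    mul_comm (b - a) D] at key

/-- The point `2 ^ 2 ^ k` up to which the `k`-th step function in the supremum defining `f0` lives;
`[breakpoint k, breakpoint (k + 1)]` is the `k`-th block. -/
noncomputable def breakpoint (k : ℕ) : ℝ := 2 ^ 2 ^ k

lemma breakpoint_pos (k : ℕ) : 0 < breakpoint k := by
  unfold breakpoint
  positivity

lemma breakpoint_zero : breakpoint 0 = 2 := by norm_num [breakpoint]

lemma breakpoint_succ (k : ℕ) : breakpoint (k + 1) = breakpoint k ^ 2 := by
  rw [breakpoint, breakpoint, ← pow_mul, ← pow_succ]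

lemma breakpoint_monotone : Monotone breakpoint := fun _ _ h =>
  pow_le_pow_right₀ one_le_two (Nat.pow_le_pow_right two_pos h)

lemma two_le_breakpoint (k : ℕ) : 2 ≤ breakpoint k :=
  breakpoint_zero.symm.trans_le (breakpoint_monotone k.zero_le)

lemma two_pow_sq_le_breakpoint (k : ℕ) : ((2 : ℝ) ^ k) ^ 2 ≤ breakpoint k := by
  rw [← pow_mul]
  refine pow_le_pow_right₀ one_le_two ?_
  rcases k with _ | k
  · simp
  · rw [pow_succ]
    exact Nat.mul_le_mul_right 2 k.lt_two_pow_self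

lemma two_pow_le_breakpoint (k : ℕ) : (2 : ℝ) ^ k ≤ breakpoint k :=
  (le_self_pow₀ (one_le_pow₀ one_le_two) two_ne_zero).trans (two_pow_sq_le_breakpoint k)

lemma tendsto_breakpoint_atTop : Tendsto breakpoint atTop atTop :=
  tendsto_atTop_mono two_pow_le_breakpoint (tendsto_pow_atTop_atTop_of_one_lt one_lt_two)

lemma log_breakpoint (k : ℕ) : log (breakpoint k) = 2 ^ k * log 2 := by
  rw [breakpoint, log_pow]
  push_cast
  rfl

lemma log_breakpoint_pos (k : ℕ) : 0 < log (breakpoint k) :=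
  log_pos (one_lt_two.trans_le (two_le_breakpoint k))

lemma log_log_breakpoint_succ (k : ℕ) :
    log (log (breakpoint (k + 1))) = log (log (breakpoint k)) + log 2 := by
  rw [breakpoint_succ, log_pow, Nat.cast_ofNat, log_mul two_ne_zero (log_breakpoint_pos k).ne',
    add_comm]

lemma two_pow_succ_le_three_mul_log_breakpoint (k : ℕ) :
    (2 : ℝ) ^ (k + 1) ≤ 3 * log (breakpoint k) := by
  have h : (2 : ℝ) ^ k * (2 / 3) ≤ 2 ^ k * log 2 := by
    gcongr
    linarith [log_two_gt_d9]
  rw [log_breakpoint, pow_succ]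
  linarith

/-- The index of the block containing `t ≥ 2`. -/
noncomputable def blockIndex (t : ℝ) : ℕ := ⌊logb 2 (logb 2 t)⌋₊

lemma tendsto_blockIndex_atTop : Tendsto blockIndex atTop atTop :=
  have h : Tendsto (logb 2) atTop atTop := tendsto_logb_atTop one_lt_two
  tendsto_nat_floor_atTop.comp (h.comp h)

lemma natCast_le_logb_logb_iff {n : ℕ} {t : ℝ} (ht : 1 < t) :
    (n : ℝ) ≤ logb 2 (logb 2 t) ↔ breakpoint n ≤ t := by
  rw [le_logb_iff_rpow_le one_lt_two (logb_pos one_lt_two ht), rpow_natCast,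
    le_logb_iff_rpow_le one_lt_two (by linarith), breakpoint, ← rpow_natCast 2 (2 ^ n)]
  push_cast
  rfl

lemma mem_block_blockIndex {t : ℝ} (ht : 2 ≤ t) :
    t ∈ Icc (breakpoint (blockIndex t)) (breakpoint (blockIndex t + 1)) := by
  have ht_one : 1 < t := by linarith
  have hnonneg : 0 ≤ logb 2 (logb 2 t) := by
    exact_mod_cast (natCast_le_logb_logb_iff (n := 0) ht_one).2 (breakpoint_zero.trans_le ht)
  refine ⟨(natCast_le_logb_logb_iff ht_one).1 (Nat.floor_le hnonneg), le_of_not_ge fun h => ?_⟩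
  have := (natCast_le_logb_logb_iff ht_one).2 h
  push_cast at this
  exact this.not_gt (Nat.lt_floor_add_one _)

/-- The height `2 ^ (k - 2 ^ k)` of the `k`-th step function in the supremum defining `f0`. -/
noncomputable def stepHeight (k : ℕ) : ℝ := 2 ^ k / breakpoint k

lemma stepHeight_pos (k : ℕ) : 0 < stepHeight k := div_pos (by positivity) (breakpoint_pos k)

lemma stepHeight_le_one (k : ℕ) : stepHeight k ≤ 1 :=
  div_le_one_of_le₀ (two_pow_le_breakpoint k) (breakpoint_pos k).le

lemma stepHeight_antitone : Antitone stepHeight := by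
  refine antitone_nat_of_succ_le fun k => ?_
  have hpos := breakpoint_pos k
  calc stepHeight (k + 1) = stepHeight k * (2 / breakpoint k) := by
        rw [stepHeight, stepHeight, breakpoint_succ, pow_succ]
        field_simp
    _ ≤ stepHeight k * 1 := by
        gcongr
        · exact (stepHeight_pos k).le
        · exact div_le_one_of_le₀ (two_le_breakpoint k) hpos.le
    _ = stepHeight k := mul_one _

lemma f0_eq_iSup (t : ℝ) : f0 t = ⨆ k : ℕ, if t < breakpoint k then stepHeight k else 0 := by
  refine iSup_congr fun k => ?_
  have hheight : (2 : ℝ) ^ ((k : ℤ) - 2 ^ k) = stepHeight k := by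
    rw [stepHeight, breakpoint, zpow_sub₀ two_ne_zero]
    norm_cast
  rw [hheight, breakpoint]

lemma step_nonneg (t : ℝ) (k : ℕ) : 0 ≤ if t < breakpoint k then stepHeight k else 0 := by
  split_ifs
  exacts [(stepHeight_pos k).le, le_rfl]

lemma step_le_one (t : ℝ) (k : ℕ) : (if t < breakpoint k then stepHeight k else 0) ≤ 1 := by
  split_ifs
  exacts [stepHeight_le_one k, zero_le_one]

lemma bddAbove_range_step (t : ℝ) :
    BddAbove (range fun k : ℕ => if t < breakpoint k then stepHeight k else 0) :=
  ⟨1, forall_mem_range.2 (step_le_one t)⟩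

lemma f0_nonneg (t : ℝ) : 0 ≤ f0 t := by
  rw [f0_eq_iSup]
  exact Real.iSup_nonneg (step_nonneg t)

lemma f0_le_one (t : ℝ) : f0 t ≤ 1 := by
  rw [f0_eq_iSup]
  exact ciSup_le (step_le_one t)

lemma f0_antitone : Antitone f0 := by
  intro s t hst
  rw [f0_eq_iSup, f0_eq_iSup]
  refine ciSup_mono (bddAbove_range_step s) fun k => ?_
  by_cases ht : t < breakpoint k
  · rw [if_pos ht, if_pos (hst.trans_lt ht)]
  · rw [if_neg ht]
    exact step_nonneg s k

lemma f0_eq_stepHeight {k : ℕ} {t : ℝ} (ht : t ∈ Ico (breakpoint k) (breakpoint (k + 1))) :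
    f0 t = stepHeight (k + 1) := by
  rw [f0_eq_iSup]
  apply le_antisymm
  · refine ciSup_le fun j => ?_
    split_ifs with hj
    · exact stepHeight_antitone (breakpoint_monotone.reflect_lt (ht.1.trans_lt hj))
    · exact (stepHeight_pos _).le
  · simpa only [if_pos ht.2] using le_ciSup (bddAbove_range_step t) (k + 1)

lemma f0_intervalIntegrable (a b : ℝ) : IntervalIntegrable f0 volume a b :=
  f0_antitone.intervalIntegrable

/-- The primitive `∫_0^t f0(s) ds`, the numerator of `aF`. -/
noncomputable def F0 (t : ℝ) : ℝ := ∫ s in (0 : ℝ)..t, f0 s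

lemma F0_continuous : Continuous F0 :=
  intervalIntegral.continuous_primitive f0_intervalIntegrable 0

lemma F0_nonneg {t : ℝ} (ht : 0 ≤ t) : 0 ≤ F0 t :=
  intervalIntegral.integral_nonneg ht fun s _ => f0_nonneg s

lemma F0_le_self {t : ℝ} (ht : 0 ≤ t) : F0 t ≤ t := by
  have h := intervalIntegral.integral_mono_on ht (f0_intervalIntegrable 0 t)
    intervalIntegrable_const fun s _ => f0_le_one s
  simpa [F0] using h

lemma abs_F0_le_self {t : ℝ} (ht : 0 ≤ t) : |F0 t| ≤ t :=
  (abs_of_nonneg (F0_nonneg ht)).trans_le (F0_le_self ht)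

lemma F0_eq_on_block {k : ℕ} {t : ℝ} (ht : t ∈ Icc (breakpoint k) (breakpoint (k + 1))) :
    F0 t = F0 (breakpoint k) + stepHeight (k + 1) * (t - breakpoint k) := by
  have hconst : ∫ s in breakpoint k..t, f0 s = ∫ _ in breakpoint k..t, stepHeight (k + 1) := by
    apply intervalIntegral.integral_congr_ae
    filter_upwards [Measure.ae_ne volume (breakpoint (k + 1))] with s hne hs
    rw [uIoc_of_le ht.1] at hs
    exact f0_eq_stepHeight ⟨hs.1.le, (hs.2.trans ht.2).lt_of_ne hne⟩
  rw [F0, ← intervalIntegral.integral_add_adjacent_intervals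
    (f0_intervalIntegrable 0 (breakpoint k)) (f0_intervalIntegrable _ t), hconst,
    intervalIntegral.integral_const, smul_eq_mul, mul_comm (t - _), F0]

lemma F0_breakpoint_succ (k : ℕ) :
    F0 (breakpoint (k + 1)) = F0 (breakpoint k) + 2 ^ (k + 1) - 2 ^ (k + 1) / breakpoint k := by
  have hpos := breakpoint_pos k
  rw [F0_eq_on_block (right_mem_Icc.2 (breakpoint_monotone k.le_succ)), stepHeight,
    breakpoint_succ]
  field_simp
  ring

lemma F0_breakpoint_le (k : ℕ) : F0 (breakpoint k) ≤ 2 ^ (k + 1) := by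
  induction k with
  | zero => simpa [breakpoint_zero] using F0_le_self zero_le_two
  | succ k ih =>
    have : 0 < 2 ^ (k + 1) / breakpoint k := div_pos (by positivity) (breakpoint_pos k)
    rw [F0_breakpoint_succ, pow_succ _ (k + 1)]
    linarith

-- The summand `4 / 2 ^ k` absorbs the loss `2 ^ (k + 1) / breakpoint k ≤ 2 / 2 ^ k` of each block.
lemma le_F0_breakpoint (k : ℕ) : 2 ^ (k + 1) - 6 + 4 / 2 ^ k ≤ F0 (breakpoint k) := by
  induction k with
  | zero =>
    have := F0_nonneg zero_le_two
    norm_num [breakpoint_zero, this]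
  | succ k ih =>
    have hloss : 2 ^ (k + 1) / breakpoint k ≤ 2 / 2 ^ k := by
      rw [div_le_div_iff₀ (breakpoint_pos k) (by positivity)]
      calc (2 : ℝ) ^ (k + 1) * 2 ^ k = 2 * (2 ^ k) ^ 2 := by ring
        _ ≤ 2 * breakpoint k := by gcongr; exact two_pow_sq_le_breakpoint k
    have hhalf : (4 : ℝ) / 2 ^ (k + 1) = 4 / 2 ^ k - 2 / 2 ^ k := by
      rw [pow_succ]
      field_simp
      norm_num
    rw [F0_breakpoint_succ, hhalf, pow_succ _ (k + 1)]
    linarith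

lemma abs_F0_breakpoint_sub_le (k : ℕ) : |F0 (breakpoint k) - 2 ^ (k + 1)| ≤ 6 := by
  have : (0 : ℝ) ≤ 4 / 2 ^ k := by positivity
  rw [abs_le]
  constructor <;> linarith [F0_breakpoint_le k, le_F0_breakpoint k]

lemma abs_F0_sub_le_on_block {k : ℕ} {t : ℝ} (ht : t ∈ Icc (breakpoint k) (breakpoint (k + 1))) :
    |F0 t - 2 ^ (k + 1)| ≤ 6 + stepHeight (k + 1) * t := by
  have hincr : |stepHeight (k + 1) * (t - breakpoint k)| ≤ stepHeight (k + 1) * t := by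
    have := stepHeight_pos (k + 1)
    rw [abs_of_nonneg (mul_nonneg this.le (sub_nonneg.2 ht.1))]
    gcongr
    linarith [breakpoint_pos k]
  rw [F0_eq_on_block ht, add_sub_right_comm]
  exact (abs_add_le _ _).trans (add_le_add (abs_F0_breakpoint_sub_le k) hincr)

lemma aF_eq_F0_div_log (t : ℝ) : aF t = F0 t / log (1 + t) := rfl

lemma abs_aF_sub_le {t E c : ℝ} (ht : 2 ≤ t) (hF : |F0 t - c| ≤ E) :
    |aF t - c / log t| ≤ (E + 1) / log t := by
  have hlog : 0 < log t := log_pos (by linarith)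
  have ha : |aF t - F0 t / log t| ≤ 1 / log t := by
    rw [aF_eq_F0_div_log]
    exact abs_div_log_one_add_sub_div_log_le ht (abs_F0_le_self (by linarith))
  have hc : |F0 t / log t - c / log t| ≤ E / log t := by
    rw [← sub_div, abs_div, abs_of_pos hlog]
    gcongr
  rw [add_div, add_comm]
  exact (abs_sub_le _ _ _).trans (add_le_add ha hc)

lemma abs_aF_sub_le_on_block {k : ℕ} {t : ℝ} (ht : t ∈ Icc (breakpoint k) (breakpoint (k + 1))) :
    |aF t - 2 ^ (k + 1) / log t| ≤ 7 / log t + 3 / breakpoint (k + 1) * t := by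
  have ht_two : 2 ≤ t := (two_le_breakpoint k).trans ht.1
  have hlog_le : log (breakpoint k) ≤ log t := log_le_log (breakpoint_pos k) ht.1
  have hlog : 0 < log t := (log_breakpoint_pos k).trans_le hlog_le
  have hpos := breakpoint_pos (k + 1)
  calc |aF t - 2 ^ (k + 1) / log t|
      ≤ (6 + stepHeight (k + 1) * t + 1) / log t :=
        abs_aF_sub_le ht_two (abs_F0_sub_le_on_block ht)
    _ = 7 / log t + 2 ^ (k + 1) / log t / breakpoint (k + 1) * t := by
        rw [stepHeight]
        field_simp
        ring
    _ ≤ 7 / log t + 3 / breakpoint (k + 1) * t := by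
        gcongr
        rw [div_le_iff₀ hlog]
        linarith [two_pow_succ_le_three_mul_log_breakpoint k]

lemma aF_le_of_two_le {t : ℝ} (ht : 2 ≤ t) : aF t ≤ 3 + 7 / log 2 + 3 := by
  obtain ⟨hk, hk'⟩ := mem_block_blockIndex ht
  set k := blockIndex t
  have hlog_le : log (breakpoint k) ≤ log t := log_le_log (breakpoint_pos k) hk
  have hmain : 2 ^ (k + 1) / log t ≤ 3 := by
    rw [div_le_iff₀ (log_pos (by linarith))]
    linarith [two_pow_succ_le_three_mul_log_breakpoint k]
  have hlog_err : 7 / log t ≤ 7 / log 2 := by gcongr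
  have hlin_err : 3 / breakpoint (k + 1) * t ≤ 3 := by
    rw [div_mul_eq_mul_div, div_le_iff₀ (breakpoint_pos _)]
    gcongr
  linarith [(abs_le.1 (abs_aF_sub_le_on_block ⟨hk, hk'⟩)).2]

lemma isBoundedUnder_le_aF : atTop.IsBoundedUnder (· ≤ ·) aF :=
  isBoundedUnder_of_eventually_le ((eventually_ge_atTop 2).mono fun _ => aF_le_of_two_le)

lemma tendsto_aF_breakpoint : Tendsto (aF ∘ breakpoint) atTop (𝓝 (2 / log 2)) := by
  have herr : Tendsto (fun k => (6 + 1) / log (breakpoint k)) atTop (𝓝 0) :=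
    (tendsto_log_atTop.comp tendsto_breakpoint_atTop).const_div_atTop _
  refine tendsto_iff_dist_tendsto_zero.2 (squeeze_zero (fun _ => dist_nonneg) (fun k => ?_) herr)
  have hlimit : 2 / log 2 = 2 ^ (k + 1) / log (breakpoint k) := by
    rw [log_breakpoint, pow_succ, mul_div_mul_left _ _ (by positivity)]
  rw [hlimit]
  exact abs_aF_sub_le (two_le_breakpoint k) (abs_F0_breakpoint_sub_le k)

lemma two_div_log_two_le_limsup_aF : 2 / log 2 ≤ limsup aF atTop :=
  le_limsup_of_tendsto_comp tendsto_breakpoint_atTop tendsto_aF_breakpoint isBoundedUnder_le_aF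

/-- The numerator `∫_1^t g(s) ds/s` of the logarithmic Cesàro mean `Mop g t`. -/
noncomputable def logPrimitive (g : ℝ → ℝ) (t : ℝ) : ℝ := ∫ s in (1 : ℝ)..t, g s / s

lemma Mop_eq_logPrimitive_div_log (g : ℝ → ℝ) (t : ℝ) : Mop g t = logPrimitive g t / log t := rfl

lemma logPrimitive_sub {g : ℝ → ℝ} {a b : ℝ}
    (ha : IntervalIntegrable (fun s => g s / s) volume 1 a)
    (hb : IntervalIntegrable (fun s => g s / s) volume 1 b) :
    logPrimitive g b - logPrimitive g a = ∫ s in a..b, g s / s :=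
  intervalIntegral.integral_interval_sub_left hb ha

lemma aF_div_self_intervalIntegrable {a b : ℝ} (ha : 0 < a) (hb : 0 < b) :
    IntervalIntegrable (fun s => aF s / s) volume a b := by
  have hF := F0_continuous
  simp only [aF_eq_F0_div_log]
  apply ContinuousOn.intervalIntegrable
  fun_prop (disch := grind [log_pos, Set.uIcc])

lemma abs_logPrimitive_aF_two_le : |logPrimitive aF 2| ≤ 2 := by
  have hbound : ∀ s ∈ uIoc (1 : ℝ) 2, ‖aF s / s‖ ≤ 2 := by
    intro s hs
    rw [uIoc_of_le one_le_two] at hs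
    have hs_pos : 0 < s := by linarith [hs.1]
    have hlog : 1 / 2 ≤ log (1 + s) := by
      have : log 2 ≤ log (1 + s) := log_le_log two_pos (by linarith [hs.1])
      linarith [log_two_gt_d9]
    calc ‖aF s / s‖ = |F0 s| / log (1 + s) / s := by
          rw [aF_eq_F0_div_log, norm_eq_abs, abs_div, abs_div, abs_of_pos hs_pos,
            abs_of_pos (by linarith : 0 < log (1 + s))]
      _ ≤ s / (1 / 2) / s := by
          gcongr
          exact abs_F0_le_self hs_pos.le
      _ = 2 := by field_simp
  have h := intervalIntegral.norm_integral_le_of_norm_le_const hbound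
  norm_num at h
  exact h

lemma abs_logPrimitive_aF_block_sub_le {k : ℕ} {t : ℝ}
    (ht : t ∈ Icc (breakpoint k) (breakpoint (k + 1))) :
    |logPrimitive aF t - logPrimitive aF (breakpoint k)
      - 2 ^ (k + 1) * (log (log t) - log (log (breakpoint k)))| ≤ 8 := by
  have hk_pos := breakpoint_pos k
  have ht_pos : 0 < t := hk_pos.trans_le ht.1
  have hk_one : 1 < breakpoint k := one_lt_two.trans_le (two_le_breakpoint k)
  have hloglog : log (log t) - log (log (breakpoint k)) ≤ log 2 := by
    have : log (log t) ≤ log (log (breakpoint (k + 1))) :=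
      log_le_log (log_pos (hk_one.trans_le ht.1)) (log_le_log ht_pos ht.2)
    linarith [log_log_breakpoint_succ k]
  have hlin : 3 / breakpoint (k + 1) * (t - breakpoint k) ≤ 3 := by
    rw [div_mul_eq_mul_div, div_le_iff₀ (breakpoint_pos _)]
    linarith [ht.2]
  have hint := abs_integral_div_self_sub_le hk_one ht.1
    (aF_div_self_intervalIntegrable hk_pos ht_pos)
    fun s hs => abs_aF_sub_le_on_block ⟨hs.1.le, hs.2.trans ht.2⟩
  rw [logPrimitive_sub (aF_div_self_intervalIntegrable one_pos hk_pos)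
    (aF_div_self_intervalIntegrable one_pos ht_pos)]
  linarith [log_two_lt_d9]

lemma abs_logPrimitive_aF_breakpoint_sub_le (n : ℕ) :
    |logPrimitive aF (breakpoint n) - 2 ^ (n + 1) * log 2| ≤ 8 * (n + 1) := by
  induction n with
  | zero =>
    have hlog := log_two_lt_d9
    have hlog' := log_two_gt_d9
    have h := abs_le.1 abs_logPrimitive_aF_two_le
    norm_num [breakpoint_zero, abs_le]
    constructor <;> linarith
  | succ n ih =>
    have hblock := abs_logPrimitive_aF_block_sub_le
      (right_mem_Icc.2 (breakpoint_monotone n.le_succ))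
    rw [log_log_breakpoint_succ, add_sub_cancel_left, abs_le] at hblock
    rw [abs_le] at ih
    rw [abs_le, pow_succ _ (n + 1)]
    push_cast
    constructor <;> linarith

/-- The position `2 * log t / log (breakpoint n)` of `t` in the `n`-th block on a logarithmic scale;
it runs from `2` to `4` along the block. -/
noncomputable def blockPosition (n : ℕ) (t : ℝ) : ℝ := 2 * log t / log (breakpoint n)

lemma blockPosition_pos (n : ℕ) {t : ℝ} (ht : 1 < t) : 0 < blockPosition n t :=
  div_pos (mul_pos two_pos (log_pos ht)) (log_breakpoint_pos n)

lemma log_blockPosition (n : ℕ) {t : ℝ} (ht : 1 < t) :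
    log (blockPosition n t) = log 2 + (log (log t) - log (log (breakpoint n))) := by
  have hlog := log_pos ht
  rw [blockPosition, log_div (by positivity) (log_breakpoint_pos n).ne',
    log_mul two_ne_zero hlog.ne', add_sub_assoc]

lemma abs_logPrimitive_aF_sub_le {n : ℕ} {t : ℝ}
    (ht : t ∈ Icc (breakpoint n) (breakpoint (n + 1))) :
    |logPrimitive aF t - 2 ^ (n + 1) * log (blockPosition n t)| ≤ 8 * (n + 2) := by
  have ht_one : 1 < t := one_lt_two.trans_le ((two_le_breakpoint n).trans ht.1)
  have hblock := abs_le.1 (abs_logPrimitive_aF_block_sub_le ht)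
  have hstart := abs_le.1 (abs_logPrimitive_aF_breakpoint_sub_le n)
  rw [log_blockPosition n ht_one, mul_add, abs_le]
  constructor <;> linarith

/-- Bound on the distance from `Mop aF` to its limit profile on the `n`-th block. -/
noncomputable def profileError (n : ℕ) : ℝ := 8 * (n + 2) / log (breakpoint n)

lemma tendsto_profileError : Tendsto profileError atTop (𝓝 0) := by
  have hlin : Tendsto (fun n : ℕ => (n : ℝ) / 2 ^ n) atTop (𝓝 0) := by
    simpa using tendsto_pow_const_div_const_pow_of_one_lt 1 one_lt_two
  have hconst : Tendsto (fun n : ℕ => (1 : ℝ) / 2 ^ n) atTop (𝓝 0) := by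
    simpa using tendsto_pow_const_div_const_pow_of_one_lt 0 one_lt_two
  have hsum := (hlin.const_mul (8 / log 2)).add (hconst.const_mul (16 / log 2))
  rw [mul_zero, mul_zero, add_zero] at hsum
  refine hsum.congr fun n => ?_
  rw [profileError, log_breakpoint]
  field_simp
  ring

lemma abs_Mop_aF_sub_le {n : ℕ} {t : ℝ} (ht : t ∈ Icc (breakpoint n) (breakpoint (n + 1))) :
    |Mop aF t - 4 / log 2 * (log (blockPosition n t) / blockPosition n t)| ≤ profileError n := by
  have hlog_start := log_breakpoint_pos n
  have hlog_le : log (breakpoint n) ≤ log t := log_le_log (breakpoint_pos n) ht.1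
  have hlog : 0 < log t := hlog_start.trans_le hlog_le
  have hcoeff : 4 / log 2 / blockPosition n t = 2 ^ (n + 1) / log t := by
    rw [blockPosition, log_breakpoint, pow_succ]
    field_simp
    norm_num
  have hprofile : 4 / log 2 * (log (blockPosition n t) / blockPosition n t) =
      2 ^ (n + 1) * log (blockPosition n t) / log t := by
    rw [mul_div_right_comm, ← hcoeff]
    ring
  calc |Mop aF t - 4 / log 2 * (log (blockPosition n t) / blockPosition n t)|
      = |logPrimitive aF t - 2 ^ (n + 1) * log (blockPosition n t)| / log t := by
        rw [Mop_eq_logPrimitive_div_log, hprofile, ← sub_div, abs_div, abs_of_pos hlog]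
    _ ≤ 8 * (n + 2) / log (breakpoint n) := by
        gcongr
        exact abs_logPrimitive_aF_sub_le ht

lemma eventually_Mop_aF_le :
    Mop aF ≤ᶠ[atTop] fun t => 4 / (exp 1 * log 2) + profileError (blockIndex t) := by
  filter_upwards [eventually_ge_atTop 2] with t ht
  have hmax : 4 / log 2 * (log (blockPosition (blockIndex t) t) / blockPosition (blockIndex t) t)
      ≤ 4 / log 2 * (exp 1)⁻¹ := by
    gcongr
    exact log_div_self_le_inv_exp_one (blockPosition_pos _ (by linarith))
  have hprofile := (abs_le.1 (abs_Mop_aF_sub_le (mem_block_blockIndex ht))).2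
  rw [mul_comm (exp 1), ← div_div, div_eq_mul_inv _ (exp 1)]
  linarith

/-- The point of the `n`-th block at position `e`, where the limit profile of `Mop aF` peaks. -/
noncomputable def peak (n : ℕ) : ℝ := breakpoint n ^ (exp 1 / 2)

lemma peak_mem_block (n : ℕ) : peak n ∈ Icc (breakpoint n) (breakpoint (n + 1)) := by
  have hone : 1 ≤ breakpoint n := one_le_two.trans (two_le_breakpoint n)
  constructor
  · exact self_le_rpow_of_one_le hone (by linarith [exp_one_gt_d9])
  · rw [breakpoint_succ, ← rpow_natCast]
    exact rpow_le_rpow_of_exponent_le hone (by norm_num; linarith [exp_one_lt_d9])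

lemma blockPosition_peak (n : ℕ) : blockPosition n (peak n) = exp 1 := by
  have := (log_breakpoint_pos n).ne'
  rw [blockPosition, peak, log_rpow (breakpoint_pos n)]
  field_simp

lemma tendsto_peak_atTop : Tendsto peak atTop atTop :=
  tendsto_atTop_mono (fun n => (peak_mem_block n).1) tendsto_breakpoint_atTop

lemma tendsto_Mop_aF_peak : Tendsto (Mop aF ∘ peak) atTop (𝓝 (4 / (exp 1 * log 2))) := by
  refine tendsto_iff_dist_tendsto_zero.2 (squeeze_zero (fun _ => dist_nonneg) (fun n => ?_)
    tendsto_profileError)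
  have hprofile := abs_Mop_aF_sub_le (peak_mem_block n)
  rwa [blockPosition_peak, log_exp, ← div_eq_mul_one_div, div_div, mul_comm (log 2)] at hprofile

lemma limsup_Mop_aF : limsup (Mop aF) atTop = 4 / (exp 1 * log 2) := by
  have hbound := (tendsto_profileError.comp tendsto_blockIndex_atTop).const_add
    (4 / (exp 1 * log 2))
  rw [add_zero] at hbound
  exact limsup_eq_of_eventuallyLE_of_tendsto_comp eventually_Mop_aF_le hbound
    tendsto_peak_atTop tendsto_Mop_aF_peak

lemma four_div_exp_one_mul_log_two_lt : 4 / (exp 1 * log 2) < 2 / log 2 := by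
  rw [← div_div]
  gcongr
  rw [div_lt_iff₀ (exp_pos 1)]
  linarith [exp_one_gt_d9]

/-- `limsup a(·,f0) ≥ 2/log 2 > 4/(e log 2) = limsup M a(·,f0)`; in particular
`limsup_{t→∞} (M a(·,f0))(t) < limsup_{t→∞} a(t,f0)`. -/
theorem limsup_avA_f0_gt_limsup_Mop :
    2 / Real.log 2 ≤ Filter.limsup aF Filter.atTop ∧
    Filter.limsup (Mop aF) Filter.atTop = 4 / (Real.exp 1 * Real.log 2) ∧
    4 / (Real.exp 1 * Real.log 2) < 2 / Real.log 2 ∧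
    Filter.limsup (Mop aF) Filter.atTop < Filter.limsup aF Filter.atTop := by
  refine ⟨two_div_log_two_le_limsup_aF, limsup_Mop_aF, four_div_exp_one_mul_log_two_lt, ?_⟩
  rw [limsup_Mop_aF]
  exact four_div_exp_one_mul_log_two_lt.trans_le two_div_log_two_le_limsup_aF
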